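/- arXiv:2512.12601 — 2 statements merged into one kernel-verified Lean document; each statement's English description precedes it below -/
import Mathlib

section
/- Let l_1, ..., l_N be unit vectors in ℝ^n that positively span ℝ^n and such that any n of them are linearly independent, and let k_f > 0. Then there exists ε̄ > 0 such that for every ε ∈ (0, ε̄) there exists δ ∈ (0, 1) with the following property: for every b ∈ ℝ^n, the unique minimizer s*(b) of QP(b) satisfies |k_f ∑_{i=1}^N s_i*(b) l_i − b| ≤ δ |b|. -/
open InnerProductSpace

/-!
Comparing a minimizer of `QP(b)` with the best point of a single ray `t ↦ t • a`, `a = k_f lᵢ`,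
bounds the squared residual by `‖b‖² - ⟪b, a⟫² / (ε + ‖a‖²) = ‖b‖² - ⟪b, a / √(ε + ‖a‖²)⟫²`.
The rescaled vectors `a / √(ε + ‖a‖²)` still positively span, so by compactness of the unit sphere
one of these inner products is at least `c ‖b‖`, with `c ∈ (0, 1)` independent of `b`. Hence
`δ = √(1 - c²)` works.
-/

variable {ι E : Type*} [NormedAddCommGroup E] [InnerProductSpace ℝ E] {L : ι → E}

/-- A family of vectors positively spans a real inner product space if every unit vector has a
positive inner product with some member of the family. The index type may be infinite. -/
def PositivelySpans (L : ι → E) : Prop :=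
  ∀ v : E, ‖v‖ = 1 → ∃ i, 0 < ⟪v, L i⟫_ℝ

namespace PositivelySpans

theorem neg (hL : PositivelySpans L) : PositivelySpans fun i => -L i := fun v hv => by
  simpa only [inner_neg_left, inner_neg_right] using hL (-v) (by rwa [norm_neg])

theorem pos_smul (hL : PositivelySpans L) {w : ι → ℝ} (hw : ∀ i, 0 < w i) :
    PositivelySpans fun i => w i • L i := fun v hv => by
  obtain ⟨i, hi⟩ := hL v hv
  exact ⟨i, by rw [real_inner_smul_right]; exact mul_pos (hw i) hi⟩

theorem const_smul (hL : PositivelySpans L) {k : ℝ} (hk : k ≠ 0) :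
    PositivelySpans fun i => k • L i := by
  rcases hk.lt_or_gt with hneg | hpos
  · simpa only [neg_smul_neg] using hL.neg.pos_smul fun _ => neg_pos.2 hneg
  · exact hL.pos_smul fun _ => hpos

theorem exists_le_inner_of_norm_eq_one [FiniteDimensional ℝ E] (hL : PositivelySpans L) :
    ∃ c : ℝ, 0 < c ∧ c < 1 ∧ ∀ v : E, ‖v‖ = 1 → ∃ i, c ≤ ⟪v, L i⟫_ℝ := by
  let U (m : ℕ) : Set E := ⋃ i, {v | 1 / (m + 1 : ℝ) < ⟪v, L i⟫_ℝ}
  have U_open (m : ℕ) : IsOpen (U m) :=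
    isOpen_iUnion fun i => isOpen_lt (by fun_prop) (by fun_prop)
  have U_mono : Monotone U := fun _ _ hmk => Set.iUnion_mono fun _ =>
    Set.ofPred_subset_ofPred.2 fun _ => (Nat.one_div_le_one_div hmk).trans_lt
  have U_cover : Metric.sphere (0 : E) 1 ⊆ ⋃ m, U m := fun v hv => by
    obtain ⟨i, hi⟩ := hL v (mem_sphere_zero_iff_norm.1 hv)
    obtain ⟨m, hm⟩ := exists_nat_one_div_lt hi
    exact Set.mem_iUnion.2 ⟨m, Set.mem_iUnion.2 ⟨i, hm⟩⟩
  obtain ⟨m, hm⟩ :=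
    (isCompact_sphere (0 : E) 1).elim_directed_cover U U_open U_cover U_mono.directed_le
  refine ⟨1 / ((m + 1 : ℕ) + 1), by positivity, ?_, fun v hv => ?_⟩
  · rw [div_lt_one (by positivity)]
    exact lt_add_of_pos_left 1 (by positivity)
  · obtain ⟨i, hi⟩ := Set.mem_iUnion.1 (hm (mem_sphere_zero_iff_norm.2 hv))
    exact ⟨i, (Nat.one_div_le_one_div m.le_succ).trans hi.le⟩

theorem exists_mul_norm_le_inner [FiniteDimensional ℝ E] (hL : PositivelySpans L) :
    ∃ c : ℝ, 0 < c ∧ c < 1 ∧ ∀ b : E, b ≠ 0 → ∃ i, c * ‖b‖ ≤ ⟪b, L i⟫_ℝ := by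
  obtain ⟨c, hc₀, hc₁, hc⟩ := hL.exists_le_inner_of_norm_eq_one
  refine ⟨c, hc₀, hc₁, fun b hb => ?_⟩
  obtain ⟨i, hi⟩ := hc (‖b‖⁻¹ • b) (norm_smul_inv_norm (𝕜 := ℝ) hb)
  rw [real_inner_smul_left, le_inv_mul_iff₀ (norm_pos_iff.2 hb), mul_comm] at hi
  exact ⟨i, hi⟩

end PositivelySpans

theorem mul_sq_add_norm_smul_sub_sq_of_eq_div {ε t : ℝ} {a b : E} (h : ε + ‖a‖ ^ 2 ≠ 0)
    (ht : t = ⟪b, a⟫_ℝ / (ε + ‖a‖ ^ 2)) :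
    ε * t ^ 2 + ‖t • a - b‖ ^ 2 = ‖b‖ ^ 2 - ⟪b, a⟫_ℝ ^ 2 / (ε + ‖a‖ ^ 2) := by
  have expand : ε * t ^ 2 + ‖t • a - b‖ ^ 2
      = (ε + ‖a‖ ^ 2) * t ^ 2 - 2 * t * ⟪b, a⟫_ℝ + ‖b‖ ^ 2 := by
    rw [norm_sub_sq_real, norm_smul, mul_pow, Real.norm_eq_abs, sq_abs, real_inner_smul_left,
      real_inner_comm]
    ring
  rw [expand, ht]
  field_simp
  ring

/-- The objective of the quadratic program `QP(b)` with vectors `L`, regularization `ε` and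
gain `kf`. Its feasible set is `Set.Ici 0`. -/
def qpObjective [Fintype ι] (ε kf : ℝ) (L : ι → E) (b : E) (s : ι → ℝ) : ℝ :=
  ε * ∑ i, s i ^ 2 + ‖kf • ∑ i, s i • L i - b‖ ^ 2

section QP

variable [Fintype ι] {ε kf : ℝ} {b : E} {s : ι → ℝ}

theorem norm_residual_sq_le_qpObjective (hε : 0 ≤ ε) :
    ‖kf • ∑ i, s i • L i - b‖ ^ 2 ≤ qpObjective ε kf L b s :=
  le_add_of_nonneg_left (by positivity)

theorem qpObjective_zero : qpObjective ε kf L b 0 = ‖b‖ ^ 2 := by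
  simp [qpObjective]

theorem qpObjective_single [DecidableEq ι] (i : ι) (t : ℝ) :
    qpObjective ε kf L b (Pi.single i t) = ε * t ^ 2 + ‖t • kf • L i - b‖ ^ 2 := by
  simp [qpObjective, Pi.single_apply, ite_pow, ite_smul, smul_comm t kf]

theorem norm_residual_le_of_isMinOn (hε : 0 ≤ ε)
    (hs : IsMinOn (qpObjective ε kf L b) (Set.Ici 0) s) :
    ‖kf • ∑ i, s i • L i - b‖ ≤ ‖b‖ := by
  have compare := (norm_residual_sq_le_qpObjective hε).trans (isMinOn_iff.1 hs 0 Set.self_mem_Ici)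
  rw [qpObjective_zero] at compare
  exact le_of_sq_le_sq compare (norm_nonneg b)

theorem norm_residual_sq_le_of_isMinOn (hε : 0 < ε)
    (hs : IsMinOn (qpObjective ε kf L b) (Set.Ici 0) s) {i : ι} (hi : 0 ≤ ⟪b, kf • L i⟫_ℝ) :
    ‖kf • ∑ i, s i • L i - b‖ ^ 2
      ≤ ‖b‖ ^ 2 - ⟪b, kf • L i⟫_ℝ ^ 2 / (ε + ‖kf • L i‖ ^ 2) := by
  classical
  set t := ⟪b, kf • L i⟫_ℝ / (ε + ‖kf • L i‖ ^ 2) with ht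
  have feasible : Pi.single i t ∈ Set.Ici (0 : ι → ℝ) := Pi.single_nonneg.2 (by positivity)
  calc ‖kf • ∑ i, s i • L i - b‖ ^ 2
      ≤ qpObjective ε kf L b s := norm_residual_sq_le_qpObjective hε.le
    _ ≤ qpObjective ε kf L b (Pi.single i t) := isMinOn_iff.1 hs _ feasible
    _ = ε * t ^ 2 + ‖t • kf • L i - b‖ ^ 2 := qpObjective_single i t
    _ = _ := mul_sq_add_norm_smul_sub_sq_of_eq_div (by positivity) ht

end QP

theorem stmt_4_general [FiniteDimensional ℝ E] [Fintype ι] (hL : PositivelySpans L) {ε kf : ℝ}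
    (hkf : kf ≠ 0) (hε : 0 < ε) :
    ∃ δ : ℝ, 0 < δ ∧ δ < 1 ∧ ∀ (b : E) (s : ι → ℝ),
      IsMinOn (qpObjective ε kf L b) (Set.Ici 0) s →
        ‖kf • ∑ i, s i • L i - b‖ ≤ δ * ‖b‖ := by
  let w (i : ι) : ℝ := (√(ε + ‖kf • L i‖ ^ 2))⁻¹
  have hw (i : ι) : 0 < w i := by positivity
  obtain ⟨c, hc₀, hc₁, hc⟩ := ((hL.const_smul hkf).pos_smul hw).exists_mul_norm_le_inner
  have hδ : 0 < 1 - c ^ 2 := sub_pos.2 (pow_lt_one₀ hc₀.le hc₁ two_ne_zero)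
  refine ⟨√(1 - c ^ 2), Real.sqrt_pos.2 hδ, ?_, fun b s hs => ?_⟩
  · rw [Real.sqrt_lt' one_pos, one_pow]
    exact sub_lt_self 1 (pow_pos hc₀ 2)
  obtain rfl | hb := eq_or_ne b 0
  · simpa only [norm_zero, mul_zero] using norm_residual_le_of_isMinOn hε.le hs
  obtain ⟨i, hi⟩ := hc b hb
  rw [real_inner_smul_right] at hi
  have inner_nonneg : 0 ≤ ⟪b, kf • L i⟫_ℝ :=
    nonneg_of_mul_nonneg_right ((by positivity : 0 ≤ c * ‖b‖).trans hi) (hw i)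
  refine le_of_sq_le_sq ?_ (by positivity)
  calc ‖kf • ∑ i, s i • L i - b‖ ^ 2
      ≤ ‖b‖ ^ 2 - ⟪b, kf • L i⟫_ℝ ^ 2 / (ε + ‖kf • L i‖ ^ 2) :=
        norm_residual_sq_le_of_isMinOn hε hs inner_nonneg
    _ = ‖b‖ ^ 2 - (w i * ⟪b, kf • L i⟫_ℝ) ^ 2 := by
        rw [mul_pow, inv_pow, Real.sq_sqrt (by positivity), div_eq_inv_mul]
    _ ≤ ‖b‖ ^ 2 - (c * ‖b‖) ^ 2 := by gcongr
    _ = (√(1 - c ^ 2) * ‖b‖) ^ 2 := by rw [mul_pow, mul_pow, Real.sq_sqrt hδ.le]; ring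

/-- If the unit vectors `l₁, …, l_N` positively span `ℝⁿ`, any `n` of
them are linearly independent, and `k_f > 0`, then there is `ε̄ > 0` such that for
every `ε ∈ (0, ε̄)` there is `δ ∈ (0, 1)` with: for every `b`, the unique minimizer
`s*(b)` of `QP(b)` satisfies `‖k_f ∑ᵢ sᵢ*(b) lᵢ − b‖ ≤ δ ‖b‖`. -/
theorem stmt_4 {n N : ℕ} (L : Fin N → EuclideanSpace ℝ (Fin n))
    (hunit : ∀ i, ‖L i‖ = 1)
    (hspan : ∀ l : EuclideanSpace ℝ (Fin n), ‖l‖ = 1 → ∃ i, 0 < ⟪l, L i⟫_ℝ)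
    (hindep : ∀ g : Fin n → Fin N, Function.Injective g →
      LinearIndependent ℝ (fun j => L (g j)))
    (kf : ℝ) (hkf : 0 < kf) :
    ∃ εbar : ℝ, 0 < εbar ∧
      ∀ ε : ℝ, 0 < ε → ε < εbar →
        ∃ δ : ℝ, 0 < δ ∧ δ < 1 ∧
          ∀ b : EuclideanSpace ℝ (Fin n), ∀ s : Fin N → ℝ,
            ((∀ i, 0 ≤ s i) ∧
              ∀ s' : Fin N → ℝ, (∀ i, 0 ≤ s' i) →
                ε * ∑ i, s i ^ 2 + ‖kf • ∑ i, s i • L i - b‖ ^ 2 ≤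
                  ε * ∑ i, s' i ^ 2 + ‖kf • ∑ i, s' i • L i - b‖ ^ 2) →
            ‖kf • ∑ i, s i • L i - b‖ ≤ δ * ‖b‖ := by
  refine ⟨1, one_pos, fun ε hε _ => ?_⟩
  obtain ⟨δ, hδ₀, hδ₁, hδ⟩ := stmt_4_general hspan hkf.ne' hε
  exact ⟨δ, hδ₀, hδ₁, fun b s hs => hδ b s (isMinOn_iff.2 hs.2)⟩
end

section
/- Let l_1, ..., l_N be unit vectors in ℝ^n and let ε > 0, k_f > 0. For each b ∈ ℝ^n let s*(b) ∈ ℝ^N denote the unique minimizer of QP(b). Then the map b ↦ s*(b) is Lipschitz continuous on ℝ^n: there exists L_φ > 0 such that |s*(b_1) − s*(b_2)| ≤ L_φ |b_1 − b_2| for all b_1, b_2 ∈ ℝ^n. -/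
/-!
Writing `A s = k_f ∑ sᵢ lᵢ`, the objective of `QP(b)` is the squared distance from `(0, b)` to
`(√ε s, A s)` in the Hilbert space `ℝᴺ × ℝⁿ`, so `QP(b)` asks for the point nearest to `(0, b)` in
a convex set independent of `b`. Metric projections onto convex sets are firmly nonexpansive, so the
difference `d` of the minimizers for `b` and `c` satisfies `ε ‖d‖² + ‖A d‖² ≤ ⟪b - c, A d⟫`.
The right-hand side is at most `‖A d‖² + ‖b - c‖² / 4`, whence `‖d‖ ≤ ‖b - c‖ / (2 √ε)`.
-/

open scoped RealInnerProductSpace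

section MetricProjection

variable {H : Type*} [NormedAddCommGroup H] [InnerProductSpace ℝ H] {K : Set H} {x y p q : H}

theorem inner_sub_sub_nonpos_of_isMinOn_norm_sub (hK : Convex ℝ K) (hp : p ∈ K)
    (hmin : IsMinOn (‖x - ·‖) K p) (hq : q ∈ K) : ⟪x - p, q - p⟫ ≤ 0 :=
  (norm_eq_iInf_iff_real_inner_le_zero hK hp).1 (hmin.iInf_eq hp).symm q hq

theorem norm_sub_sq_le_inner_of_isMinOn_norm_sub (hK : Convex ℝ K) (hp : p ∈ K) (hq : q ∈ K)
    (hpmin : IsMinOn (‖x - ·‖) K p) (hqmin : IsMinOn (‖y - ·‖) K q) :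
    ‖p - q‖ ^ 2 ≤ ⟪x - y, p - q⟫ := by
  have hxp : ⟪x - p, q - p⟫ ≤ 0 := inner_sub_sub_nonpos_of_isMinOn_norm_sub hK hp hpmin hq
  have hyq : ⟪y - q, p - q⟫ ≤ 0 := inner_sub_sub_nonpos_of_isMinOn_norm_sub hK hq hqmin hp
  have hsplit : ⟪x - y, p - q⟫ - ‖p - q‖ ^ 2 = -⟪x - p, q - p⟫ - ⟪y - q, p - q⟫ := by
    rw [← real_inner_self_eq_norm_sq, ← inner_sub_left, ← inner_neg_right, neg_sub,
      ← inner_sub_left]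
    congr 1
    abel
  linarith

end MetricProjection

section Tikhonov

variable {E F : Type*} [NormedAddCommGroup E] [InnerProductSpace ℝ E]
  [NormedAddCommGroup F] [InnerProductSpace ℝ F]

/-- The Tikhonov-regularized least-squares objective for the equation `A s = b`, with
regularization parameter `ε`. -/
def tikhonovFunctional (ε : ℝ) (A : E →ₗ[ℝ] F) (b : F) (s : E) : ℝ :=
  ε * ‖s‖ ^ 2 + ‖A s - b‖ ^ 2

/-- The linear map `s ↦ (√ε s, A s)` into the Hilbert product, which turns Tikhonov-regularized
least squares into a nearest-point problem. -/
noncomputable def tikhonovEmbedding (ε : ℝ) (A : E →ₗ[ℝ] F) : E →ₗ[ℝ] WithLp 2 (E × F) :=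
  (WithLp.linearEquiv 2 ℝ (E × F)).symm.toLinearMap ∘ₗ (√ε • LinearMap.id).prod A

variable {ε : ℝ} {A : E →ₗ[ℝ] F} {K : Set E} {b c : F} {u v : E}

theorem tikhonovEmbedding_apply (s : E) :
    tikhonovEmbedding ε A s = WithLp.toLp 2 (√ε • s, A s) :=
  rfl

theorem norm_tikhonovEmbedding_sq (hε : 0 ≤ ε) (s : E) :
    ‖tikhonovEmbedding ε A s‖ ^ 2 = ε * ‖s‖ ^ 2 + ‖A s‖ ^ 2 := by
  simp [tikhonovEmbedding_apply, WithLp.prod_norm_sq_eq_of_L2, norm_smul, mul_pow, Real.sq_sqrt hε]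

theorem inner_toLp_sub_tikhonovEmbedding (s : E) :
    ⟪WithLp.toLp 2 (0, b) - WithLp.toLp 2 (0, c), tikhonovEmbedding ε A s⟫ = ⟪b - c, A s⟫ := by
  simp [tikhonovEmbedding_apply, WithLp.prod_inner_apply]

theorem tikhonovFunctional_eq_norm_sub_sq (hε : 0 ≤ ε) (s : E) :
    tikhonovFunctional ε A b s = ‖WithLp.toLp 2 (0, b) - tikhonovEmbedding ε A s‖ ^ 2 := by
  simp [tikhonovFunctional, tikhonovEmbedding_apply, WithLp.prod_norm_sq_eq_of_L2, norm_smul,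
    mul_pow, Real.sq_sqrt hε, norm_sub_rev b]

theorem isMinOn_norm_sub_tikhonovEmbedding (hε : 0 ≤ ε)
    (hu : IsMinOn (tikhonovFunctional ε A b) K u) :
    IsMinOn (‖WithLp.toLp 2 (0, b) - ·‖) (tikhonovEmbedding ε A '' K)
      (tikhonovEmbedding ε A u) := by
  rintro _ ⟨s, hs, rfl⟩
  have hle : tikhonovFunctional ε A b u ≤ tikhonovFunctional ε A b s := hu hs
  rw [tikhonovFunctional_eq_norm_sub_sq hε, tikhonovFunctional_eq_norm_sub_sq hε] at hle
  exact le_of_sq_le_sq hle (norm_nonneg _)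

theorem norm_sq_add_norm_map_sq_le_inner_of_isMinOn_tikhonovFunctional (hε : 0 ≤ ε)
    (hK : Convex ℝ K) (hu : u ∈ K) (hv : v ∈ K)
    (humin : IsMinOn (tikhonovFunctional ε A b) K u)
    (hvmin : IsMinOn (tikhonovFunctional ε A c) K v) :
    ε * ‖u - v‖ ^ 2 + ‖A (u - v)‖ ^ 2 ≤ ⟪b - c, A (u - v)⟫ := by
  have hfirm := norm_sub_sq_le_inner_of_isMinOn_norm_sub
    (hK.linear_image (tikhonovEmbedding ε A)) (Set.mem_image_of_mem _ hu)
    (Set.mem_image_of_mem _ hv) (isMinOn_norm_sub_tikhonovEmbedding hε humin)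
    (isMinOn_norm_sub_tikhonovEmbedding hε hvmin)
  rwa [← map_sub, norm_tikhonovEmbedding_sq hε, inner_toLp_sub_tikhonovEmbedding] at hfirm

theorem norm_sub_le_of_isMinOn_tikhonovFunctional (hε : 0 < ε) (hK : Convex ℝ K)
    (hu : u ∈ K) (hv : v ∈ K) (humin : IsMinOn (tikhonovFunctional ε A b) K u)
    (hvmin : IsMinOn (tikhonovFunctional ε A c) K v) :
    ‖u - v‖ ≤ (2 * √ε)⁻¹ * ‖b - c‖ := by
  have henergy : ε * ‖u - v‖ ^ 2 + ‖A (u - v)‖ ^ 2 ≤ ⟪b - c, A (u - v)⟫ :=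
    norm_sq_add_norm_map_sq_le_inner_of_isMinOn_tikhonovFunctional hε.le hK hu hv humin hvmin
  have hcauchy : ⟪b - c, A (u - v)⟫ ≤ ‖b - c‖ * ‖A (u - v)‖ := real_inner_le_norm _ _
  have hsq : (2 * √ε * ‖u - v‖) ^ 2 ≤ ‖b - c‖ ^ 2 := by
    rw [mul_pow, mul_pow, Real.sq_sqrt hε.le]
    linarith [sq_nonneg (‖b - c‖ - 2 * ‖A (u - v)‖)]
  rw [le_inv_mul_iff₀ (by positivity)]
  exact le_of_sq_le_sq hsq (norm_nonneg _)

theorem stmt_6_general (hε : 0 < ε) (hK : Convex ℝ K) (sstar : F → E)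
    (hfeas : ∀ b, sstar b ∈ K)
    (hmin : ∀ b, IsMinOn (tikhonovFunctional ε A b) K (sstar b)) :
    ∃ Lφ : ℝ, 0 < Lφ ∧ ∀ b₁ b₂ : F, ‖sstar b₁ - sstar b₂‖ ≤ Lφ * ‖b₁ - b₂‖ :=
  ⟨(2 * √ε)⁻¹, by positivity, fun b₁ b₂ =>
    norm_sub_le_of_isMinOn_tikhonovFunctional hε hK (hfeas b₁) (hfeas b₂) (hmin b₁) (hmin b₂)⟩

end Tikhonov

section NonnegativeCombinations

variable {ι F : Type*}

theorem convex_setOf_forall_nonneg : Convex ℝ {s : EuclideanSpace ℝ ι | ∀ i, 0 ≤ s i} :=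
  fun _ hs _ ht _ _ ha hb _ i => add_nonneg (mul_nonneg ha (hs i)) (mul_nonneg hb (ht i))

variable [Fintype ι] [NormedAddCommGroup F] [InnerProductSpace ℝ F]

/-- The linear map `s ↦ k ∑ i, sᵢ lᵢ` from coefficient vectors, with the Euclidean norm, to scaled
linear combinations of the family `l`. -/
noncomputable def scaledCombination (k : ℝ) (l : ι → F) : EuclideanSpace ℝ ι →ₗ[ℝ] F :=
  k • (EuclideanSpace.basisFun ι ℝ).toBasis.constr ℝ l

theorem tikhonovFunctional_scaledCombination (ε k : ℝ) (l : ι → F) (b : F)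
    (s : EuclideanSpace ℝ ι) :
    tikhonovFunctional ε (scaledCombination k l) b s =
      ε * ∑ i, s i ^ 2 + ‖k • ∑ i, s i • l i - b‖ ^ 2 := by
  simp [tikhonovFunctional, scaledCombination, EuclideanSpace.real_norm_sq_eq,
    Module.Basis.constr_apply_fintype]

end NonnegativeCombinations

/-- For unit vectors `l₁, …, l_N` in `ℝⁿ` and `ε, k_f > 0`, let
`s*(b)` denote the unique minimizer of `QP(b)`. Then `b ↦ s*(b)` is Lipschitz
continuous: there is `L_φ > 0` with `‖s*(b₁) − s*(b₂)‖ ≤ L_φ ‖b₁ − b₂‖` for all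
`b₁, b₂ ∈ ℝⁿ`. -/
theorem stmt_6 {n N : ℕ} (L : Fin N → EuclideanSpace ℝ (Fin n))
    (hunit : ∀ i, ‖L i‖ = 1) (ε kf : ℝ) (hε : 0 < ε) (hkf : 0 < kf)
    (sstar : EuclideanSpace ℝ (Fin n) → EuclideanSpace ℝ (Fin N))
    (hfeas : ∀ b, ∀ i, 0 ≤ sstar b i)
    (hmin : ∀ b : EuclideanSpace ℝ (Fin n), ∀ s : Fin N → ℝ, (∀ i, 0 ≤ s i) →
      ε * ∑ i, sstar b i ^ 2 + ‖kf • ∑ i, sstar b i • L i - b‖ ^ 2 ≤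
        ε * ∑ i, s i ^ 2 + ‖kf • ∑ i, s i • L i - b‖ ^ 2)
    (huniq : ∀ b : EuclideanSpace ℝ (Fin n), ∀ s : Fin N → ℝ, (∀ i, 0 ≤ s i) →
      (∀ s' : Fin N → ℝ, (∀ i, 0 ≤ s' i) →
        ε * ∑ i, s i ^ 2 + ‖kf • ∑ i, s i • L i - b‖ ^ 2 ≤
          ε * ∑ i, s' i ^ 2 + ‖kf • ∑ i, s' i • L i - b‖ ^ 2) →
      s = fun i => sstar b i) :
    ∃ Lφ : ℝ, 0 < Lφ ∧
      ∀ b₁ b₂ : EuclideanSpace ℝ (Fin n), ‖sstar b₁ - sstar b₂‖ ≤ Lφ * ‖b₁ - b₂‖ := by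
  refine stmt_6_general (A := scaledCombination kf L) hε convex_setOf_forall_nonneg sstar hfeas
    fun b => isMinOn_iff.2 fun s hs => ?_
  simpa only [tikhonovFunctional_scaledCombination] using hmin b s hs
end
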